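/- Let β be a rational number with β > 1. Let λ₁, λ₂ be nonzero real numbers with λ₁λ₂ > 0 and let φ₁, φ₂ : ℝ → ℝ be bi-Lipschitz homeomorphisms such that for i = 1, 2 there are nonconstant real polynomial functions fᵢ, gᵢ with gᵢ ∘ φᵢ = fᵢ, and suppose there are real numbers L₁, L₂ with φᵢ(t)/t → Lᵢ as |t| → +∞ and |λ₁|^β·L₁ = |λ₂|^β·L₂. Define Φ : ℝ² → ℝ² by Φ(x, y) := (λ₁x, |λ₁|^β·x^β·φ₁(y/x^β)) for x > 0, Φ(x, y) := (λ₂x, |λ₂|^β·|x|^β·φ₂(y/|x|^β)) for x < 0, and Φ(0, y) := (0, |λ₁|^β·L₁·y). Then there exists δ > 0 such that Φ is Lipschitz on the strip {(x, y) ∈ ℝ² : |x| < δ}. -/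

import Mathlib

open Filter Topology

theorem aux_hasDeriv (φ : ℝ → ℝ) (hc : Continuous φ) (p q : Polynomial ℝ)
    (hpq : ∀ t : ℝ, q.eval (φ t) = p.eval t) (t : ℝ) (h : q.derivative.eval (φ t) ≠ 0) :
    HasDerivAt φ (p.derivative.eval t / q.derivative.eval (φ t)) t := by
  rw [hasDerivAt_iff_tendsto_slope]
  have h1 : Tendsto (slope (fun x => p.eval x) t) (𝓝[≠] t) (𝓝 (p.derivative.eval t)) :=
    hasDerivAt_iff_tendsto_slope.1 (p.hasDerivAt t)
  have h2 : ContinuousAt (dslope (fun x => q.eval x) (φ t)) (φ t) :=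
    continuousAt_dslope_same.2 q.differentiableAt
  have h3 : Tendsto (fun s => dslope (fun x => q.eval x) (φ t) (φ s)) (𝓝[≠] t)
      (𝓝 (q.derivative.eval (φ t))) := by
    have h4 : Tendsto φ (𝓝[≠] t) (𝓝 (φ t)) := hc.continuousAt.tendsto.mono_left nhdsWithin_le_nhds
    have := h2.tendsto.comp h4
    rwa [dslope_same, Polynomial.deriv] at this
  refine (h1.div h3 h).congr' ?_
  filter_upwards [h3.eventually_ne h, self_mem_nhdsWithin] with s hs hst
  have e : (φ s - φ t) * dslope (fun x => q.eval x) (φ t) (φ s) = p.eval s - p.eval t := by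
    have := sub_smul_dslope (fun x => q.eval x) (φ t) (φ s)
    simp only [smul_eq_mul, hpq] at this
    exact this
  have hst' : s - t ≠ 0 := sub_ne_zero.2 hst
  rw [Pi.div_apply, div_eq_iff hs, slope_def_field, slope_def_field, ← e]
  ring

/-- `X p' - n p` is `O(t^(n-1))`. -/
theorem aux_R (p : Polynomial ℝ) (n : ℕ) (hn : p.natDegree = n) (h1 : 1 ≤ n) :
    (fun t : ℝ => t * p.derivative.eval t - n * p.eval t) =O[atTop] fun t : ℝ => t ^ (n - 1) := by
  set R : Polynomial ℝ := Polynomial.X * p.derivative - Polynomial.C (n : ℝ) * p with hR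
  have hd : R.degree ≤ ((Polynomial.X ^ (n-1) : Polynomial ℝ)).degree := by
    rw [Polynomial.degree_X_pow, Polynomial.degree_le_iff_coeff_zero]
    intro m hm
    have hm' : n - 1 < m := by exact_mod_cast hm
    obtain ⟨k, rfl⟩ : ∃ k, m = k + 1 := ⟨m - 1, by omega⟩
    simp only [hR, Polynomial.coeff_sub, Polynomial.coeff_X_mul, Polynomial.coeff_derivative,
      Polynomial.coeff_C_mul]
    rcases (by omega : k + 1 = n ∨ n < k + 1) with h | h
    · rw [← h]; push_cast; ring
    · rw [Polynomial.coeff_eq_zero_of_natDegree_lt (by omega)]; ring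
  have := Polynomial.isBigO_atTop_of_degree_le _ _ hd
  simpa [hR] using this

theorem aux_deg (φ : ℝ → ℝ) (p q : Polynomial ℝ) (hp : p ≠ 0) (hq : q ≠ 0)
    (hpq : ∀ t : ℝ, q.eval (φ t) = p.eval t)
    (ht : Tendsto φ atTop atTop) (hth : φ =Θ[atTop] (fun t : ℝ => t)) :
    p.natDegree = q.natDegree := by
  have key : ∀ r : Polynomial ℝ, r ≠ 0 → (fun t : ℝ => r.eval t) =Θ[atTop] fun t : ℝ => t ^ r.natDegree := by
    intro r hr
    refine (r.isEquivalent_atTop_lead.isTheta).trans ?_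
    exact (Asymptotics.isTheta_const_mul_left (Polynomial.leadingCoeff_ne_zero.2 hr)).2
      (Asymptotics.isTheta_refl _ _)
  have h1 := key p hp
  have h2 : (fun t => q.eval (φ t)) =Θ[atTop] fun t => φ t ^ q.natDegree :=
    ⟨(key q hq).1.comp_tendsto ht, (key q hq).2.comp_tendsto ht⟩
  simp only [hpq] at h2
  have h3 := (h1.symm.trans h2).trans (hth.pow q.natDegree)
  have h4 : (fun t : ℝ => t ^ (p.natDegree)) =O[atTop] fun t : ℝ => t ^ q.natDegree := h3.1
  have h5 : (fun t : ℝ => t ^ (q.natDegree)) =O[atTop] fun t : ℝ => t ^ p.natDegree := h3.2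
  have m : ∀ a b : ℕ, ((fun t : ℝ => t ^ a) =O[atTop] fun t : ℝ => t ^ b) → a ≤ b := by
    intro a b h
    by_contra! hab
    have hlo : (fun t : ℝ => t ^ b) =o[atTop] fun t : ℝ => t ^ a :=
      Asymptotics.isLittleO_pow_pow_atTop_of_lt hab
    have h6 := h.trans_isLittleO hlo
    refine Asymptotics.isLittleO_irrefl ?_ h6
    exact ((eventually_gt_atTop (0:ℝ)).mono fun t ht => (pow_pos ht a).ne').frequently
  exact le_antisymm (m _ _ h4) (m _ _ h5)

theorem aux_pos (φ : ℝ → ℝ) (hc : Continuous φ) (p q : Polynomial ℝ)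
    (hp1 : 1 ≤ p.natDegree) (hq1 : 1 ≤ q.natDegree)
    (hpq : ∀ t : ℝ, q.eval (φ t) = p.eval t) (L : ℝ) (hL : 0 < L)
    (hlim : Tendsto (fun t => φ t / t) atTop (𝓝 L)) :
    ∃ C T : ℝ, 0 < T ∧ ∀ t, T ≤ t → ∃ d, HasDerivAt φ d t ∧ |φ t - t * d| ≤ C := by
  have hp : p ≠ 0 := by rintro rfl; simp at hp1
  have hq : q ≠ 0 := by rintro rfl; simp at hq1
  have heq : (fun t => φ t / t * t) =ᶠ[atTop] φ := by
    filter_upwards [eventually_gt_atTop (0:ℝ)] with t h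
    field_simp
  have ht : Tendsto φ atTop atTop := (hlim.pos_mul_atTop hL tendsto_id).congr' heq
  have hth : φ =Θ[atTop] (fun t : ℝ => t) := by
    have h1 : (fun t => φ t / t) =Θ[atTop] (fun _ => (1:ℝ)) :=
      ((Asymptotics.isEquivalent_const_iff_tendsto hL.ne').2 hlim).isTheta.trans (Asymptotics.isTheta_const_const hL.ne' one_ne_zero)
    have h2 := h1.mul (Asymptotics.isTheta_refl (fun t : ℝ => t) atTop)
    simp only [one_mul] at h2
    exact heq.symm.trans_isTheta h2
  have hdeg := aux_deg φ p q hp hq hpq ht hth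
  set n := q.natDegree with hn
  have hRp := aux_R p n hdeg hq1
  have hRq := (aux_R q n rfl hq1).comp_tendsto ht
  have hRq' : (fun t : ℝ => φ t * q.derivative.eval (φ t) - n * q.eval (φ t)) =O[atTop]
      fun t => φ t ^ (n-1) := hRq
  have hpow := hth.pow (n-1)
  have hdq : q.derivative ≠ 0 := by
    intro h
    have := Polynomial.derivative_eq_zero.1 h
    omega
  have hdn : q.derivative.natDegree = n - 1 := Polynomial.natDegree_derivative q
  have hdqT : (fun t : ℝ => q.derivative.eval t) =Θ[atTop] fun t : ℝ => t ^ (n-1) := by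
    refine (q.derivative.isEquivalent_atTop_lead.isTheta).trans ?_
    rw [hdn]
    exact (Asymptotics.isTheta_const_mul_left (Polynomial.leadingCoeff_ne_zero.2 hdq)).2
      (Asymptotics.isTheta_refl _ _)
  have hden : (fun t : ℝ => t ^ (n-1)) =O[atTop] fun t => q.derivative.eval (φ t) :=
    hpow.2.trans (hdqT.2.comp_tendsto ht)
  have hnum : (fun t : ℝ => (φ t * q.derivative.eval (φ t) - n * q.eval (φ t)) -
      (t * p.derivative.eval t - n * p.eval t)) =O[atTop] fun t => q.derivative.eval (φ t) :=
    ((hRq'.trans hpow.1).sub hRp).trans hden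
  obtain ⟨C, hC⟩ := hnum.bound
  have hne : ∀ᶠ t in atTop, q.derivative.eval (φ t) ≠ 0 := by
    obtain ⟨c, hcc⟩ := hden.bound
    filter_upwards [hcc, eventually_gt_atTop (0:ℝ)] with t h1 h2 h3
    rw [h3, norm_zero, mul_zero] at h1
    exact (pow_pos h2 (n-1)).ne' (norm_le_zero_iff.1 h1)
  obtain ⟨T, hT⟩ := eventually_atTop.1 (hC.and hne)
  refine ⟨C, max T 1, by positivity, fun t htT => ?_⟩
  obtain ⟨h1, h2⟩ := hT t ((le_max_left _ _).trans htT)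
  refine ⟨_, aux_hasDeriv φ hc p q hpq t h2, ?_⟩
  rw [hpq] at h1
  have e : φ t - t * (p.derivative.eval t / q.derivative.eval (φ t)) =
    ((φ t * q.derivative.eval (φ t) - n * p.eval t) -
      (t * p.derivative.eval t - n * p.eval t)) / q.derivative.eval (φ t) := by
    field_simp; ring
  rw [e, abs_div, div_le_iff₀ (abs_pos.2 h2)]
  exact h1

theorem aux_ne (φ : ℝ → ℝ) (hc : Continuous φ) (p q : Polynomial ℝ)
    (hp1 : 1 ≤ p.natDegree) (hq1 : 1 ≤ q.natDegree)
    (hpq : ∀ t : ℝ, q.eval (φ t) = p.eval t) (L : ℝ) (hL : L ≠ 0)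
    (hlim : Tendsto (fun t => φ t / t) atTop (𝓝 L)) :
    ∃ C T : ℝ, 0 < T ∧ ∀ t, T ≤ t → ∃ d, HasDerivAt φ d t ∧ |φ t - t * d| ≤ C := by
  rcases lt_or_gt_of_ne hL with h | h
  · obtain ⟨C, T, hT, H⟩ := aux_pos (fun t => - φ t) hc.neg p (q.comp (-Polynomial.X)) hp1
      (by simpa [Polynomial.natDegree_comp] using hq1) (by simpa using hpq) (-L) (by linarith)
      (by simpa [neg_div] using hlim.neg)
    refine ⟨C, T, hT, fun t ht => ?_⟩
    obtain ⟨d, hd, hb⟩ := H t ht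
    have hd2 : HasDerivAt φ (-d) t := by
      have h3 := hd.neg
      have h4 : (-fun t => -φ t) = φ := by
        funext s
        simp
      rwa [h4] at h3
    refine ⟨-d, hd2, ?_⟩
    rw [← abs_neg]
    convert hb using 2
    ring
  · exact aux_pos φ hc p q hp1 hq1 hpq L h hlim

theorem aux_split (f : ℝ → ℝ) (s : Set ℝ) (hs : s.OrdConnected) (a C : ℝ)
    (h1 : ∀ u ∈ s, ∀ v ∈ s, u ≤ v → v ≤ a → |f u - f v| ≤ C * |u - v|)
    (h2 : ∀ u ∈ s, ∀ v ∈ s, u ≤ v → a ≤ u → |f u - f v| ≤ C * |u - v|) :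
    ∀ u ∈ s, ∀ v ∈ s, |f u - f v| ≤ C * |u - v| := by
  have main : ∀ u ∈ s, ∀ v ∈ s, u ≤ v → |f u - f v| ≤ C * |u - v| := by
    intro u hu v hv huv
    rcases le_total v a with h | h
    · exact h1 u hu v hv huv h
    rcases le_total a u with h' | h'
    · exact h2 u hu v hv huv h'
    have ha : a ∈ s := hs.out hu hv ⟨h', h⟩
    have e1 := h1 u hu a ha h' le_rfl
    have e2 := h2 a ha v hv h le_rfl
    have e3 := abs_sub_le (f u) (f a) (f v)
    rw [abs_of_nonpos (by linarith : u - a ≤ 0)] at e1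
    rw [abs_of_nonpos (by linarith : a - v ≤ 0)] at e2
    rw [abs_of_nonpos (by linarith : u - v ≤ 0)]
    nlinarith
  intro u hu v hv
  rcases le_total u v with h | h
  · exact main u hu v hv h
  · rw [abs_sub_comm, abs_sub_comm u]; exact main v hv u hu h

theorem aux_G (φ : ℝ → ℝ) (K : NNReal) (hK : LipschitzWith K φ) (p q : Polynomial ℝ)
    (hp1 : 1 ≤ p.natDegree) (hq1 : 1 ≤ q.natDegree)
    (hpq : ∀ t : ℝ, q.eval (φ t) = p.eval t) (L : ℝ) (hL : L ≠ 0)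
    (hlim : Tendsto (fun t => φ t / t) atTop (𝓝 L)) :
    ∃ C : ℝ, ∀ y, 0 ≤ y → ∀ u v : ℝ, 0 < u → 0 < v →
      |u * φ (y / u) - v * φ (y / v)| ≤ C * |u - v| := by
  obtain ⟨C, T, hT, H⟩ := aux_ne φ hK.continuous p q hp1 hq1 hpq L hL hlim
  have hK' : ∀ s t, |φ s - φ t| ≤ K * |s - t| := fun s t => by
    simpa [Real.dist_eq] using hK.dist_le_mul s t
  refine ⟨max C (|φ 0| + 2 * K * T), fun y hy u v hu hv => ?_⟩
  have hK0 : (0:ℝ) ≤ K := K.2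
  refine aux_split (fun u => u * φ (y / u)) (Set.Ioi 0) Set.ordConnected_Ioi (y / T) _ ?_ ?_ u hu v hv
  · intro u hu v hv huv hva
    have hu : 0 < u := hu
    have hv : 0 < v := hv
    have hC := (H T le_rfl).choose_spec.2
    have hC0 : 0 ≤ C := (abs_nonneg _).trans hC
    refine le_trans ?_ (mul_le_mul_of_nonneg_right (le_max_left _ _) (abs_nonneg _))
    have hd : ∀ w : ℝ, ∃ d, w ∈ Set.Ioc 0 (y / T) → HasDerivAt (fun u => u * φ (y / u)) d w ∧ ‖d‖ ≤ C := by
      intro w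
      by_cases hw : w ∈ Set.Ioc 0 (y / T)
      · obtain ⟨hw0, hw1⟩ := hw
        have : T ≤ y / w := by
          rw [le_div_iff₀ hw0]; rw [le_div_iff₀ hT] at hw1; linarith
        obtain ⟨d, hd, hb⟩ := H _ this
        refine ⟨φ (y / w) - y / w * d, fun _ => ⟨?_, hb⟩⟩
        have h1 : HasDerivAt (fun u : ℝ => y / u) (-y / w^2) w := by
          have := (hasDerivAt_inv hw0.ne').const_mul y
          refine HasDerivAt.congr_deriv (f' := y * -(w ^ 2)⁻¹) this ?_
          ring
        have h2 : HasDerivAt (fun u => u * φ (y / u)) (1 * φ (y / w) + w * (d * (-y / w ^ 2))) w :=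
          (hasDerivAt_id w).mul (hd.comp w h1)
        refine h2.congr_deriv ?_
        field_simp
        ring
      · exact ⟨0, fun h => absurd h hw⟩
    choose d hd using hd
    have := (convex_Ioc (0:ℝ) (y/T)).norm_image_sub_le_of_norm_hasDerivWithin_le
      (f := fun u => u * φ (y / u)) (f' := d) (C := C)
      (fun x hx => (hd x hx).1.hasDerivWithinAt) (fun x hx => (hd x hx).2)
      (x := v) (y := u) ⟨hv, hva⟩ ⟨hu, huv.trans hva⟩
    exact this
  · intro u hu v hv huv hau
    have hu : 0 < u := hu
    have hv : 0 < v := hv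
    refine le_trans ?_ (mul_le_mul_of_nonneg_right (le_max_right _ _) (abs_nonneg _))
    have ht2 : y / v ≤ T := by
      rw [div_le_iff₀ hv]; rw [div_le_iff₀ hT] at hau; nlinarith
    have ht0 : 0 ≤ y / v := by positivity
    have e : u * φ (y / u) - v * φ (y / v) = (u - v) * φ (y/v) + u * (φ (y/u) - φ (y/v)) := by ring
    have e1 : u * |y / u - y / v| = (y / v) * |u - v| := by
      rw [show y / u - y / v = (y / v) * (v - u) / u by field_simp, abs_div, abs_mul,
        abs_of_pos hu, abs_of_nonneg ht0, abs_sub_comm v u]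
      field_simp
    have e2 := hK' (y/u) (y/v)
    have e3 := hK' (y/v) 0
    rw [sub_zero, abs_of_nonneg ht0] at e3
    have e4 : |φ (y/v)| ≤ |φ 0| + K * T := by
      have := abs_sub_abs_le_abs_sub (φ (y/v)) (φ 0)
      nlinarith
    show |u * φ (y / u) - v * φ (y / v)| ≤ _
    rw [e]
    refine (abs_add_le _ _).trans ?_
    rw [abs_mul, abs_mul, abs_of_pos hu]
    have e5 : u * |φ (y/u) - φ (y/v)| ≤ K * T * |u - v| := by
      calc _ ≤ u * (K * |y/u - y/v|) := by gcongr
        _ = K * (y / v * |u - v|) := by rw [← e1]; ring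
        _ ≤ K * (T * |u - v|) := by gcongr
        _ = _ := by ring
    have := mul_le_mul_of_nonneg_left e4 (abs_nonneg (u - v))
    linarith

/-- Both signs of `y`, plus the limit `u → 0`. -/
theorem aux_all (φ : ℝ → ℝ) (hbij : Function.Bijective φ)
    (hlip : ∃ K : NNReal, LipschitzWith K φ)
    (hinv : ∃ K : NNReal, LipschitzWith K (Function.invFun φ)) (p q : Polynomial ℝ)
    (hp1 : 1 ≤ p.natDegree) (hq1 : 1 ≤ q.natDegree)
    (hpq : ∀ t : ℝ, q.eval (φ t) = p.eval t) (L : ℝ)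
    (htop : Tendsto (fun t => φ t / t) atTop (𝓝 L))
    (hbot : Tendsto (fun t => φ t / t) atBot (𝓝 L)) :
    ∃ C : ℝ, 0 ≤ C ∧ (∀ y, ∀ u v : ℝ, 0 < u → 0 < v →
      |u * φ (y / u) - v * φ (y / v)| ≤ C * |u - v|) ∧
      (∀ y u : ℝ, 0 < u → |u * φ (y / u) - L * y| ≤ C * u) ∧
      (∀ y z u : ℝ, 0 < u → |u * φ (y / u) - u * φ (z / u)| ≤ C * |y - z|) := by
  obtain ⟨K, hK⟩ := hlip
  obtain ⟨K', hK'⟩ := hinv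
  have hL : L ≠ 0 := by
    rintro rfl
    have h1 : Tendsto (fun t => (K' : ℝ) * (|φ t / t| + |φ 0| / t)) atTop (𝓝 (K' * (|0| + 0))) :=
      ((htop.abs).add (tendsto_const_nhds.div_atTop tendsto_id)).const_mul _
    simp only [abs_zero, add_zero, mul_zero] at h1
    obtain ⟨t, h2, h3⟩ := ((h1.eventually_lt_const one_pos).and (eventually_gt_atTop (0:ℝ))).exists
    have h4 := hK'.dist_le_mul (φ t) (φ 0)
    rw [Function.leftInverse_invFun hbij.1, Function.leftInverse_invFun hbij.1, Real.dist_eq,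
      Real.dist_eq, sub_zero, abs_of_pos h3] at h4
    have h5 := abs_sub (φ t) (φ 0)
    rw [abs_div, abs_of_pos h3, ← add_div, ← mul_div_assoc, div_lt_one h3] at h2
    have := mul_le_mul_of_nonneg_left h5 K'.2
    have : t < t := h4.trans_lt (lt_of_le_of_lt this h2)
    exact lt_irrefl _ this
  obtain ⟨C1, h1⟩ := aux_G φ K hK p q hp1 hq1 hpq L hL htop
  obtain ⟨C2, h2⟩ := aux_G (fun t => φ (-t)) K
    (by
      refine LipschitzWith.of_dist_le_mul fun x y => ?_
      simpa using hK.dist_le_mul (-x) (-y))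
    (p.comp (-Polynomial.X)) q (by simpa [Polynomial.natDegree_comp] using hp1) hq1
    (by intro t; simp [hpq]) (-L) (neg_ne_zero.2 hL)
    (by
      have := (hbot.comp tendsto_neg_atTop_atBot).neg
      refine this.congr fun t => ?_
      simp [div_neg])
  have hA : ∀ y, ∀ u v : ℝ, 0 < u → 0 < v →
      |u * φ (y / u) - v * φ (y / v)| ≤ (max (max C1 C2) K) * |u - v| := by
    intro y u v hu hv
    rcases le_total 0 y with h | h
    · refine (h1 y h u v hu hv).trans (mul_le_mul_of_nonneg_right ?_ (abs_nonneg _))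
      exact (le_max_left _ _).trans (le_max_left _ _)
    · have := h2 (-y) (by linarith) u v hu hv
      simp only [neg_div, neg_neg] at this
      refine this.trans (mul_le_mul_of_nonneg_right ?_ (abs_nonneg _))
      exact (le_max_right _ _).trans (le_max_left _ _)
  have hK0 : (0:ℝ) ≤ K := K.2
  refine ⟨max (max C1 C2) K, hK0.trans (le_max_right _ _), hA, ?_, ?_⟩
  · intro y u hu
    have hlim : Tendsto (fun v => v * φ (y / v)) (𝓝[>] 0) (𝓝 (L * y)) := by
      rcases lt_trichotomy y 0 with h | h | h
      · have : Tendsto (fun v : ℝ => y / v) (𝓝[>] 0) atBot := by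
          simpa only [div_eq_mul_inv] using tendsto_inv_nhdsGT_zero.const_mul_atTop_of_neg h
        refine ((hbot.comp this).mul_const y).congr' ?_
        filter_upwards [self_mem_nhdsWithin] with v hv
        have hv : v ≠ 0 := ne_of_gt hv
        have := h.ne
        simp only [Function.comp]; field_simp
      · subst h
        have : Tendsto (fun v : ℝ => v * φ 0) (𝓝[>] 0) (𝓝 (0 * φ 0)) :=
          (tendsto_id.mono_left nhdsWithin_le_nhds).mul_const _
        simpa using this
      · have : Tendsto (fun v : ℝ => y / v) (𝓝[>] 0) atTop := by
          simpa only [div_eq_mul_inv] using tendsto_inv_nhdsGT_zero.const_mul_atTop h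
        refine ((htop.comp this).mul_const y).congr' ?_
        filter_upwards [self_mem_nhdsWithin] with v hv
        have hv : v ≠ 0 := ne_of_gt hv
        have := h.ne'
        simp only [Function.comp]; field_simp
    have hl := (tendsto_const_nhds (x := u * φ (y / u))).sub hlim |>.abs
    have hr : Tendsto (fun v : ℝ => (max (max C1 C2) K) * |u - v|) (𝓝[>] 0)
        (𝓝 ((max (max C1 C2) K) * |u - 0|)) :=
      (((tendsto_const_nhds).sub (tendsto_id.mono_left nhdsWithin_le_nhds)).abs).const_mul _
    have := le_of_tendsto_of_tendsto hl hr (by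
      filter_upwards [self_mem_nhdsWithin] with v hv
      exact hA y u v hu hv)
    rwa [sub_zero, abs_of_pos hu] at this
  · intro y z u hu
    have := hK.dist_le_mul (y / u) (z / u)
    rw [Real.dist_eq, Real.dist_eq, ← sub_div, abs_div, abs_of_pos hu] at this
    rw [← mul_sub, abs_mul, abs_of_pos hu]
    calc _ ≤ u * (K * (|y - z| / u)) := by gcongr
      _ = K * |y - z| := by field_simp
      _ ≤ _ := mul_le_mul_of_nonneg_right (le_max_right _ _) (abs_nonneg _)

theorem aux_rpow (b : ℝ) (hb : 1 < b) (x y : ℝ) (hx : 0 ≤ x) (hx1 : x ≤ 1) (hy : 0 ≤ y) (hy1 : y ≤ 1) :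
    |x ^ b - y ^ b| ≤ b * |x - y| := by
  refine (convex_Icc (0:ℝ) 1).norm_image_sub_le_of_norm_hasDerivWithin_le
      (f := fun u => u ^ b) (f' := fun u => b * u ^ (b - 1)) (C := b)
      (fun x hx => (Real.hasDerivAt_rpow_const (Or.inr hb.le)).hasDerivWithinAt) (fun u hu => ?_)
      (x := y) (y := x) ⟨hy, hy1⟩ ⟨hx, hx1⟩
  have h1 := Real.rpow_le_one hu.1 hu.2 (by linarith : 0 ≤ b - 1)
  have h2 := Real.rpow_nonneg hu.1 (b - 1)
  rw [Real.norm_of_nonneg (by positivity)]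
  nlinarith

/-- The inverse β-transform of a β-transition is Lipschitz on some strip `{|x| < δ}`. -/
theorem stmt_10 (β : ℚ) (hβ : 1 < β)
    (l1 l2 : ℝ) (hl1 : l1 ≠ 0) (hl2 : l2 ≠ 0) (hll : 0 < l1 * l2)
    (φ1 φ2 : ℝ → ℝ)
    (hφ1bij : Function.Bijective φ1) (hφ1lip : ∃ K : NNReal, LipschitzWith K φ1)
    (hφ1inv : ∃ K : NNReal, LipschitzWith K (Function.invFun φ1))
    (hφ2bij : Function.Bijective φ2) (hφ2lip : ∃ K : NNReal, LipschitzWith K φ2)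
    (hφ2inv : ∃ K : NNReal, LipschitzWith K (Function.invFun φ2))
    (p1 q1 p2 q2 : Polynomial ℝ)
    (hp1 : 1 ≤ p1.natDegree) (hq1 : 1 ≤ q1.natDegree)
    (hp2 : 1 ≤ p2.natDegree) (hq2 : 1 ≤ q2.natDegree)
    (hpq1 : ∀ t : ℝ, q1.eval (φ1 t) = p1.eval t)
    (hpq2 : ∀ t : ℝ, q2.eval (φ2 t) = p2.eval t)
    (L1 L2 : ℝ)
    (hL1top : Tendsto (fun t => φ1 t / t) atTop (𝓝 L1))
    (hL1bot : Tendsto (fun t => φ1 t / t) atBot (𝓝 L1))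
    (hL2top : Tendsto (fun t => φ2 t / t) atTop (𝓝 L2))
    (hL2bot : Tendsto (fun t => φ2 t / t) atBot (𝓝 L2))
    (hLL : |l1| ^ (β : ℝ) * L1 = |l2| ^ (β : ℝ) * L2)
    (Φ : ℝ × ℝ → ℝ × ℝ)
    (hΦpos : ∀ x y : ℝ, 0 < x →
      Φ (x, y) = (l1 * x, |l1| ^ (β : ℝ) * x ^ (β : ℝ) * φ1 (y / x ^ (β : ℝ))))
    (hΦneg : ∀ x y : ℝ, x < 0 →
      Φ (x, y) = (l2 * x, |l2| ^ (β : ℝ) * |x| ^ (β : ℝ) * φ2 (y / |x| ^ (β : ℝ))))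
    (hΦ0 : ∀ y : ℝ, Φ (0, y) = (0, |l1| ^ (β : ℝ) * L1 * y)) :
    ∃ δ : ℝ, 0 < δ ∧ ∃ K : NNReal, LipschitzOnWith K Φ {z : ℝ × ℝ | |z.1| < δ} := by
  have hb : (1:ℝ) < (β:ℝ) := by exact_mod_cast hβ
  set b : ℝ := (β:ℝ)
  obtain ⟨C1, hC1, A1, B1, D1⟩ := aux_all φ1 hφ1bij hφ1lip hφ1inv p1 q1 hp1 hq1 hpq1 L1 hL1top hL1bot
  obtain ⟨C2, hC2, A2, B2, D2⟩ := aux_all φ2 hφ2bij hφ2lip hφ2inv p2 q2 hp2 hq2 hpq2 L2 hL2top hL2bot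
  have ha1 : 0 ≤ |l1| ^ b := Real.rpow_nonneg (abs_nonneg _) _
  have ha2 : 0 ≤ |l2| ^ b := Real.rpow_nonneg (abs_nonneg _) _
  set a1 := |l1| ^ b
  set a2 := |l2| ^ b
  have hb0 : b ≠ 0 := by linarith
  -- Lipschitz in `x`, one half
  have half : ∀ (φ : ℝ → ℝ) (a C L y : ℝ), 0 ≤ a → 0 ≤ C →
      (∀ y, ∀ u v : ℝ, 0 < u → 0 < v → |u * φ (y / u) - v * φ (y / v)| ≤ C * |u - v|) →
      (∀ y u : ℝ, 0 < u → |u * φ (y / u) - L * y| ≤ C * u) → 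
      ∀ F : ℝ → ℝ, F 0 = a * L * y → (∀ x, 0 < x → F x = a * x ^ b * φ (y / x ^ b)) →
      ∀ x z, 0 ≤ x → x < 1 → 0 ≤ z → z < 1 → |F x - F z| ≤ a * C * b * |x - z| := by
    intro φ a C L y ha hC A B F F0 F1 x z hx hx1 hz hz1
    have key : |F x - F z| ≤ a * (C * |x ^ b - z ^ b|) := by
      rcases hx.eq_or_lt with rfl | hx <;> rcases hz.eq_or_lt with rfl | hz
      · simp
      · rw [F0, F1 z hz, Real.zero_rpow hb0, abs_sub_comm, zero_sub, abs_neg,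
          abs_of_pos (Real.rpow_pos_of_pos hz b), mul_assoc, mul_assoc, ← mul_sub, abs_mul,
          abs_of_nonneg ha]
        exact mul_le_mul_of_nonneg_left (B y _ (Real.rpow_pos_of_pos hz b)) ha
      · rw [F0, F1 x hx, Real.zero_rpow hb0, sub_zero, 
          abs_of_pos (Real.rpow_pos_of_pos hx b), mul_assoc, mul_assoc, ← mul_sub, abs_mul,
          abs_of_nonneg ha]
        exact mul_le_mul_of_nonneg_left (B y _ (Real.rpow_pos_of_pos hx b)) ha
      · rw [F1 z hz, F1 x hx, mul_assoc, mul_assoc, ← mul_sub, abs_mul, abs_of_nonneg ha]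
        exact mul_le_mul_of_nonneg_left
          (A y _ _ (Real.rpow_pos_of_pos hx b) (Real.rpow_pos_of_pos hz b)) ha
    calc _ ≤ _ := key
      _ ≤ a * (C * (b * |x - z|)) := by
        gcongr
        exact aux_rpow b hb x z hx hx1.le hz hz1.le
      _ = _ := by ring
  set M1 := a1 * C1 * b
  set M2 := a2 * C2 * b
  have hM1 : 0 ≤ M1 := by positivity
  have hM2 : 0 ≤ M2 := by positivity
  have hX : ∀ y, ∀ x ∈ Set.Ioo (-1:ℝ) 1, ∀ z ∈ Set.Ioo (-1:ℝ) 1,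
      |(Φ (x, y)).2 - (Φ (z, y)).2| ≤ (M1 + M2) * |x - z| := by
    intro y
    refine aux_split (fun x => (Φ (x, y)).2) _ Set.ordConnected_Ioo 0 _ ?_ ?_
    · intro u hu v hv huv hv0
      have := half φ2 a2 C2 L2 y ha2 hC2 A2 B2 (fun x => (Φ (-x, y)).2)
        (by simp only [neg_zero, hΦ0]; rw [hLL])
        (by
          intro x hx
          simp only [hΦneg (-x) y (by linarith), abs_neg, abs_of_pos hx]) (-u) (-v)
        (by linarith) (by linarith [hu.1]) (by linarith) (by linarith [hv.1])
      simp only [neg_neg] at this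
      rw [show -u - -v = -(u - v) by ring, abs_neg] at this
      refine this.trans (mul_le_mul_of_nonneg_right (by linarith) (abs_nonneg _))
    · intro u hu v hv huv hv0
      have := half φ1 a1 C1 L1 y ha1 hC1 A1 B1 (fun x => (Φ (x, y)).2)
        (by simp only [hΦ0])
        (by
          intro x hx
          simp only [hΦpos x y hx]) u v
        (by linarith) (hu.2) (by linarith) (hv.2)
      refine this.trans (mul_le_mul_of_nonneg_right (by linarith) (abs_nonneg _))
  set N := a1 * C1 + a2 * C2 + a1 * |L1|
  have hY : ∀ x y z, |(Φ (x, y)).2 - (Φ (x, z)).2| ≤ N * |y - z| := by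
    intro x y z
    have n1 : 0 ≤ a1 * C1 := by positivity
    have n2 : 0 ≤ a2 * C2 := by positivity
    have n3 : 0 ≤ a1 * |L1| := by positivity
    rcases lt_trichotomy x 0 with h | h | h
    · rw [hΦneg x y h, hΦneg x z h]
      simp only
      rw [mul_assoc, mul_assoc, ← mul_sub, abs_mul, abs_of_nonneg ha2]
      have := mul_le_mul_of_nonneg_left (D2 y z _ (Real.rpow_pos_of_pos (abs_pos.2 h.ne) b)) ha2
      refine this.trans ?_
      rw [← mul_assoc]
      exact mul_le_mul_of_nonneg_right (by linarith) (abs_nonneg _)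
    · subst h
      rw [hΦ0, hΦ0]
      simp only
      rw [← mul_sub, abs_mul, abs_mul, abs_of_nonneg ha1]
      exact mul_le_mul_of_nonneg_right (by linarith) (abs_nonneg _)
    · rw [hΦpos x y h, hΦpos x z h]
      simp only
      rw [mul_assoc, mul_assoc, ← mul_sub, abs_mul, abs_of_nonneg ha1]
      have := mul_le_mul_of_nonneg_left (D1 y z _ (Real.rpow_pos_of_pos h b)) ha1
      refine this.trans ?_
      rw [← mul_assoc]
      exact mul_le_mul_of_nonneg_right (by linarith) (abs_nonneg _)
  have hF : ∀ x z y w, |(Φ (x, y)).1 - (Φ (z, w)).1| ≤ (|l1| + |l2|) * |x - z| := by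
    have f1 : ∀ x y, 0 ≤ x → (Φ (x, y)).1 = l1 * x := by
      intro x y hx
      rcases hx.eq_or_lt with rfl | hx
      · simp [hΦ0]
      · rw [hΦpos x y hx]
    have f2 : ∀ x y, x ≤ 0 → (Φ (x, y)).1 = l2 * x := by
      intro x y hx
      rcases hx.eq_or_lt with rfl | hx
      · simp [hΦ0]
      · rw [hΦneg x y hx]
    have f3 : ∀ x y, (Φ (x, y)).1 = (Φ (x, 0)).1 := by
      intro x y
      rcases le_total 0 x with h | h
      · rw [f1 x y h, f1 x 0 h]
      · rw [f2 x y h, f2 x 0 h]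
    intro x z y w
    rw [f3 x y, f3 z w]
    refine aux_split (fun x => (Φ (x, 0)).1) Set.univ Set.ordConnected_univ 0 _ ?_ ?_ x trivial z trivial
    · intro u _ v _ huv hv
      show |(Φ (u, 0)).1 - (Φ (v, 0)).1| ≤ _
      rw [f2 u 0 (by linarith), f2 v 0 hv, ← mul_sub, abs_mul]
      exact mul_le_mul_of_nonneg_right (by linarith [abs_nonneg l1]) (abs_nonneg _)
    · intro u _ v _ huv hv
      show |(Φ (u, 0)).1 - (Φ (v, 0)).1| ≤ _
      rw [f1 v 0 (by linarith), f1 u 0 hv, ← mul_sub, abs_mul]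
      exact mul_le_mul_of_nonneg_right (by linarith [abs_nonneg l2]) (abs_nonneg _)
  have hN : 0 ≤ N := by positivity
  refine ⟨1, one_pos, Real.toNNReal (|l1| + |l2| + (M1 + M2) + N), ?_⟩
  refine LipschitzOnWith.of_dist_le_mul ?_
  rintro ⟨x, y⟩ hx ⟨z, w⟩ hz
  have hx : x ∈ Set.Ioo (-1:ℝ) 1 := abs_lt.1 hx
  have hz : z ∈ Set.Ioo (-1:ℝ) 1 := abs_lt.1 hz
  rw [Real.coe_toNNReal _ (by positivity)]
  have d1 : |x - z| ≤ dist (x, y) (z, w) := by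
    rw [Prod.dist_eq, Real.dist_eq]; exact le_max_left _ _
  have d2 : |y - w| ≤ dist (x, y) (z, w) := by
    rw [Prod.dist_eq, Real.dist_eq, Real.dist_eq]; exact le_max_right _ _
  have d0 : 0 ≤ dist (x, y) (z, w) := dist_nonneg
  generalize dist (x, y) (z, w) = d at d1 d2 d0
  rw [Prod.dist_eq, Real.dist_eq, Real.dist_eq]
  have hl : 0 ≤ |l1| + |l2| := by positivity
  have hM : 0 ≤ M1 + M2 := by positivity
  have g1 := mul_le_mul_of_nonneg_left d1 hl
  have g2 := mul_le_mul_of_nonneg_left d1 hM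
  have g3 := mul_le_mul_of_nonneg_left d2 hN
  have g4 := mul_nonneg hl d0
  have g5 := mul_nonneg hM d0
  have g6 := mul_nonneg hN d0
  have k1 := hF x z y w
  have k2 := hX y x hx z hz
  have k3 := hY z y w
  have k4 := abs_sub_le (Φ (x, y)).2 (Φ (z, y)).2 (Φ (z, w)).2
  refine max_le ?_ ?_ <;> nlinarith
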